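/- arXiv:2001.11308 — 2 statements merged into one kernel-verified Lean document; each statement's English description precedes it below -/
import Mathlib

section
/- In the uncontrolled setting with an irreducible stochastic matrix P: if the domain D is nonempty, then C_{i,j} + C_{j,i} ≥ 0 for all 1 ≤ i, j ≤ d, and the slice D_∘ = D ∩ {y ∈ ℝ^d : y_d = 0} is a compact subset of ℝ^d. Moreover, if D has nonempty interior, then C_{i,j} + C_{j,i} > 0 for all 1 ≤ i ≠ j ≤ d. -/
open Matrix

lemma aux_min (m : ℕ) (P : Matrix (Fin (m + 1)) (Fin (m + 1)) ℝ)
    (hP0 : ∀ i j, 0 ≤ P i j) (hP1 : ∀ i, ∑ j, P i j = 1)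
    (hirr : ∀ i j, ∃ k : ℕ, 1 ≤ k ∧ 0 < (P ^ k) i j)
    (j : Fin (m + 1)) (z : Fin (m + 1) → ℝ) (hj : 0 ≤ z j)
    (hz : ∀ i, i ≠ j → ∑ k, P i k * z k ≤ z i) (i : Fin (m + 1)) : 0 ≤ z i := by
  obtain ⟨i0, -, hi0⟩ := Finset.exists_min_image Finset.univ z ⟨j, Finset.mem_univ _⟩
  by_contra hneg
  push Not at hneg
  have hm : z i0 < 0 := lt_of_le_of_lt (hi0 i (Finset.mem_univ _)) hneg
  have step : ∀ a, z a = z i0 → ∀ b, 0 < P a b → z b = z i0 := by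
    intro a ha b hb
    have haj : a ≠ j := by rintro rfl; linarith
    have h1 := hz a haj
    have h2 : ∑ k, P a k * (z k - z i0) ≤ 0 := by
      have : ∑ k, P a k * (z k - z i0) = ∑ k, P a k * z k - z i0 := by
        simp only [mul_sub, Finset.sum_sub_distrib, ← Finset.sum_mul, hP1, one_mul]
      linarith
    have h3 : P a b * (z b - z i0) ≤ ∑ k, P a k * (z k - z i0) :=
      Finset.single_le_sum (f := fun k => P a k * (z k - z i0))
        (fun k _ => mul_nonneg (hP0 a k) (sub_nonneg.2 (hi0 k (Finset.mem_univ _))))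
        (Finset.mem_univ b)
    have h4 := hi0 b (Finset.mem_univ _)
    have h5 : z b - z i0 ≤ 0 := by
      by_contra h
      push Not at h
      have := mul_pos hb h
      linarith
    linarith
  have reach : ∀ k : ℕ, ∀ b, (P ^ k) i0 b ≠ 0 → z b = z i0 := by
    intro k
    induction k with
    | zero =>
      intro b hb
      by_cases h : i0 = b
      · rw [h]
      · simp [Matrix.one_apply, h] at hb
    | succ k ih =>
      intro b hb
      rw [pow_succ, Matrix.mul_apply] at hb
      obtain ⟨a, -, ha⟩ := Finset.exists_ne_zero_of_sum_ne_zero hb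
      have h1 := left_ne_zero_of_mul ha
      have h2 := right_ne_zero_of_mul ha
      exact step a (ih a h1) b (lt_of_le_of_ne (hP0 a b) h2.symm)
  obtain ⟨k, -, hk⟩ := hirr i0 j
  have := reach k j hk.ne'
  linarith

lemma aux_mulVec (m : ℕ) (P : Matrix (Fin (m + 1)) (Fin (m + 1)) ℝ)
    (j : Fin (m + 1)) (z : Fin (m + 1) → ℝ) (hj : z j = 0) (k : Fin m) :
    ((1 - P).submatrix j.succAbove j.succAbove *ᵥ fun l => z (j.succAbove l)) k
      = z (j.succAbove k) - ∑ l, P (j.succAbove k) l * z l := by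
  have h : ((1 - P) *ᵥ z) (j.succAbove k)
      = z (j.succAbove k) - ∑ l, P (j.succAbove k) l * z l := by
    rw [Matrix.sub_mulVec, Matrix.one_mulVec]; rfl
  rw [← h]
  simp only [Matrix.mulVec, dotProduct, Matrix.submatrix_apply]
  rw [Fin.sum_univ_succAbove _ j, hj]
  simp

lemma aux_unit (m : ℕ) (P : Matrix (Fin (m + 1)) (Fin (m + 1)) ℝ)
    (hP0 : ∀ i j, 0 ≤ P i j) (hP1 : ∀ i, ∑ j, P i j = 1)
    (hirr : ∀ i j, ∃ k : ℕ, 1 ≤ k ∧ 0 < (P ^ k) i j)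
    (j : Fin (m + 1)) : IsUnit ((1 - P).submatrix j.succAbove j.succAbove).det := by
  rw [isUnit_iff_ne_zero]
  intro h
  obtain ⟨v, hv0, hv⟩ := Matrix.exists_mulVec_eq_zero_iff.2 h
  apply hv0
  obtain ⟨z, hzj, hz⟩ : ∃ z : Fin (m + 1) → ℝ, z j = 0 ∧ v = fun l => z (j.succAbove l) :=
    ⟨j.insertNth (α := fun _ => ℝ) 0 v, by simp, by simp⟩
  subst hz
  have key : ∀ i, i ≠ j → ∑ l, P i l * z l = z i := by
    intro i hi
    obtain ⟨k, rfl⟩ := Fin.exists_succAbove_eq hi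
    have := aux_mulVec m P j z hzj k
    rw [hv] at this
    simp only [Pi.zero_apply] at this
    linarith
  have h1 := aux_min m P hP0 hP1 hirr j z hzj.ge (fun i hi => (key i hi).le)
  have h2 := aux_min m P hP0 hP1 hirr j (-z) (by simp [hzj]) (fun i hi => by
    simp [key i hi])
  funext l
  have a := h1 (j.succAbove l)
  have b := h2 (j.succAbove l)
  simp only [Pi.neg_apply] at b
  simp only [Pi.zero_apply]
  linarith

lemma aux_bound (n : ℕ)
    (P : Matrix (Fin (n + 2)) (Fin (n + 2)) ℝ)
    (c : Fin (n + 2) → ℝ)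
    (hP0 : ∀ i j, 0 ≤ P i j)
    (hP1 : ∀ i, ∑ j, P i j = 1)
    (hirr : ∀ i j, ∃ k : ℕ, 1 ≤ k ∧ 0 < (P ^ k) i j)
    (C : Fin (n + 2) → Fin (n + 2) → ℝ)
    (hCdiag : ∀ j, C j j = 0)
    (hCoff : ∀ (j : Fin (n + 2)) (k : Fin (n + 1)),
      C (j.succAbove k) j =
        (((1 - P).submatrix j.succAbove j.succAbove)⁻¹ *ᵥ fun l => c (j.succAbove l)) k)
    (x : Fin (n + 2) → ℝ) (hx : ∀ i, (∑ j, P i j * x j) - c i ≤ x i)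
    (i j : Fin (n + 2)) : x j - x i ≤ C i j := by
  have hu : ∀ i, i ≠ j → C i j - ∑ l, P i l * C l j = c i := by
    intro i hi
    obtain ⟨k, rfl⟩ := Fin.exists_succAbove_eq hi
    rw [← aux_mulVec (n + 1) P j (fun l => C l j) (hCdiag j) k]
    have : (fun l => C (j.succAbove l) j) =
        ((1 - P).submatrix j.succAbove j.succAbove)⁻¹ *ᵥ fun l => c (j.succAbove l) :=
      funext (hCoff j)
    rw [this, Matrix.mulVec_mulVec, Matrix.mul_nonsing_inv _ (aux_unit (n + 1) P hP0 hP1 hirr j),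
      Matrix.one_mulVec]
  have := aux_min (n + 1) P hP0 hP1 hirr j (fun l => x l - x j + C l j)
    (by simp [hCdiag]) (fun i hi => by
      have h1 := hu i hi
      have h2 := hx i
      simp only [mul_add, mul_sub, Finset.sum_add_distrib, Finset.sum_sub_distrib,
        ← Finset.sum_mul, hP1]
      linarith) i
  linarith



/-- Uncontrolled setting with an irreducible stochastic matrix `P`
(`d = n + 2`), `Q = I − P`, cost vector `c̄`, cost matrix `C` and domain `D`.
If `D` is nonempty then `C i j + C j i ≥ 0` for all `i, j` and the slice
`D_∘ = D ∩ {y_d = 0}` is compact.  If moreover `D` has nonempty interior then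
`C i j + C j i > 0` for all `i ≠ j`. -/
theorem nonempty_domain_costs_and_compact_slice
    (n : ℕ)
    (P : Matrix (Fin (n + 2)) (Fin (n + 2)) ℝ)
    (c : Fin (n + 2) → ℝ)
    (hP0 : ∀ i j, 0 ≤ P i j)
    (hP1 : ∀ i, ∑ j, P i j = 1)
    (hirr : ∀ i j, ∃ k : ℕ, 1 ≤ k ∧ 0 < (P ^ k) i j)
    (C : Fin (n + 2) → Fin (n + 2) → ℝ)
    (hCdiag : ∀ j, C j j = 0)
    (hCoff : ∀ (j : Fin (n + 2)) (k : Fin (n + 1)),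
      C (j.succAbove k) j =
        (((1 - P).submatrix j.succAbove j.succAbove)⁻¹ *ᵥ fun l => c (j.succAbove l)) k)
    (D : Set (Fin (n + 2) → ℝ))
    (hD : D = {x | ∀ i, (∑ j, P i j * x j) - c i ≤ x i}) :
    (D.Nonempty →
      (∀ i j : Fin (n + 2), 0 ≤ C i j + C j i) ∧
      IsCompact (D ∩ {y | y (Fin.last (n + 1)) = 0})) ∧
    ((interior D).Nonempty →
      ∀ i j : Fin (n + 2), i ≠ j → 0 < C i j + C j i) := by
  have key : ∀ x ∈ D, ∀ i j, x j - x i ≤ C i j := by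
    intro x hx i j
    rw [hD] at hx
    exact aux_bound n P c hP0 hP1 hirr C hCdiag hCoff x hx i j
  refine ⟨?_, ?_⟩
  · rintro ⟨x, hx⟩
    refine ⟨fun i j => by linarith [key x hx i j, key x hx j i], ?_⟩
    have hcl : IsClosed (D ∩ {y | y (Fin.last (n + 1)) = 0}) := by
      apply IsClosed.inter
      · rw [hD, Set.setOf_forall]
        exact isClosed_iInter fun i => isClosed_le (by fun_prop) (by fun_prop)
      · exact isClosed_eq (by fun_prop) (by fun_prop)
    refine (isCompact_Icc (a := fun i => - C i (Fin.last (n + 1)))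
      (b := fun i => C (Fin.last (n + 1)) i)).of_isClosed_subset hcl ?_
    rintro y ⟨hy, hy0⟩
    simp only [Set.mem_setOf_eq] at hy0
    refine ⟨fun i => ?_, fun i => ?_⟩
    · have := key y hy i (Fin.last (n + 1))
      simp only
      linarith
    · have := key y hy (Fin.last (n + 1)) i
      simp only
      linarith
  · rintro ⟨x, hx⟩ i j hij
    have hc : Continuous fun t : ℝ => x + t • (Pi.single i 1 : Fin (n + 2) → ℝ) := by fun_prop
    have hn : ∀ᶠ t in nhds (0 : ℝ), x + t • (Pi.single i 1 : Fin (n + 2) → ℝ) ∈ interior D :=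
      hc.continuousAt.eventually (isOpen_interior.mem_nhds (by simpa using hx))
    obtain ⟨ε, hε, hb⟩ := Metric.eventually_nhds_iff.1 hn
    have h1 := hb (y := ε / 2) (by
      rw [Real.dist_eq, sub_zero, abs_of_pos (by linarith)]; linarith)
    have h2 := key x (interior_subset hx) i j
    have h3 := key _ (interior_subset h1) j i
    simp [hij.symm] at h3
    linarith
end

section
/- In the uncontrolled setting with an irreducible stochastic matrix P and invariant probability μ, the following four conditions are equivalent: (i) the domain D is nonempty; (ii) there exist 1 ≤ i ≠ j ≤ d such that C_{i,j} + C_{j,i} ≥ 0; (iii) ∑_{i=1}^d μ_i c̄_i ≥ 0; (iv) for all 1 ≤ i ≠ j ≤ d, C_{i,j} + C_{j,i} ≥ 0. -/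
open Matrix

lemma aux_max {n : ℕ} (P : Matrix (Fin (n + 2)) (Fin (n + 2)) ℝ)
    (hP0 : ∀ i j, 0 ≤ P i j) (hP1 : ∀ i, ∑ j, P i j = 1)
    (hirr : ∀ i j, ∃ k : ℕ, 1 ≤ k ∧ 0 < (P ^ k) i j)
    (y : Fin (n + 2) → ℝ) (i : Fin (n + 2))
    (h : ∀ k, k ≠ i → y k ≤ ∑ j, P k j * y j) : ∀ k, y k ≤ y i := by
  obtain ⟨k0, hk0⟩ := Finite.exists_max y
  suffices hs : y i = y k0 by
    intro k
    rw [hs]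
    exact hk0 k
  by_contra hne
  have step : ∀ k l, y k = y k0 → 0 < P k l → y l = y k0 := by
    intro k l hk hl
    have hki : k ≠ i := by
      rintro rfl
      exact hne hk
    have h1 := h k hki
    have h2 : ∑ j, P k j * (y k0 - y j) ≤ 0 := by
      simp only [mul_sub, Finset.sum_sub_distrib, ← Finset.sum_mul, hP1]
      linarith
    have h3 : P k l * (y k0 - y l) ≤ ∑ j, P k j * (y k0 - y j) :=
      Finset.single_le_sum (f := fun j => P k j * (y k0 - y j))
        (fun j _ => mul_nonneg (hP0 k j) (sub_nonneg.2 (hk0 j))) (Finset.mem_univ l)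
    have h4 := hk0 l
    by_contra hlt
    have h5 : 0 < y k0 - y l := sub_pos.2 (lt_of_le_of_ne h4 hlt)
    have := mul_pos hl h5
    linarith
  have steps : ∀ m : ℕ, ∀ k l, y k = y k0 → 0 < (P ^ m) k l → y l = y k0 := by
    intro m
    induction m with
    | zero =>
      intro k l hk hl
      by_cases hkl : k = l
      · rw [← hkl]; exact hk
      · simp [Matrix.one_apply, hkl] at hl
    | succ m ih =>
      intro k l hk hl
      rw [pow_succ', Matrix.mul_apply] at hl
      obtain ⟨q, -, hq⟩ := Finset.exists_lt_of_sum_lt (s := Finset.univ)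
        (f := fun _ : Fin (n + 2) => (0 : ℝ)) (by simpa using hl)
      have h1 : 0 < P k q := by
        rcases (hP0 k q).eq_or_lt with h0 | h0
        · simp [← h0] at hq
        · exact h0
      exact ih q l (step k q hk h1) (pos_of_mul_pos_right hq h1.le)
  obtain ⟨m, -, hm⟩ := hirr k0 i
  exact hne (steps m k0 i rfl hm)

lemma aux_sub {n : ℕ} (P : Matrix (Fin (n + 2)) (Fin (n + 2)) ℝ)
    (y : Fin (n + 2) → ℝ) (j : Fin (n + 2)) (hy : y j = 0) (k : Fin (n + 1)) :
    (((1 - P).submatrix j.succAbove j.succAbove) *ᵥ fun l => y (j.succAbove l)) k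
      = y (j.succAbove k) - ∑ l, P (j.succAbove k) l * y l := by
  have h : ((1 - P) *ᵥ y) (j.succAbove k) = y (j.succAbove k) - ∑ l, P (j.succAbove k) l * y l := by
    rw [Matrix.sub_mulVec, Matrix.one_mulVec]
    rfl
  rw [← h]
  simp only [Matrix.mulVec, dotProduct]
  rw [Fin.sum_univ_succAbove _ j, hy]
  simp

lemma aux_inv {n : ℕ} (P : Matrix (Fin (n + 2)) (Fin (n + 2)) ℝ)
    (hP0 : ∀ i j, 0 ≤ P i j) (hP1 : ∀ i, ∑ j, P i j = 1)
    (hirr : ∀ i j, ∃ k : ℕ, 1 ≤ k ∧ 0 < (P ^ k) i j) (j : Fin (n + 2)) :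
    IsUnit ((1 - P).submatrix j.succAbove j.succAbove).det := by
  rw [isUnit_iff_ne_zero]
  intro h0
  obtain ⟨v, hv, hv0⟩ := Matrix.exists_mulVec_eq_zero_iff.2 h0
  apply hv
  let y : Fin (n + 2) → ℝ := j.insertNth (α := fun _ => ℝ) 0 v
  have hyj : y j = 0 := by simp [y]
  have hyv : (fun l => y (j.succAbove l)) = v := by
    funext l
    simp [y]
  have hk : ∀ k, k ≠ j → y k = ∑ l, P k l * y l := by
    intro k hk
    obtain ⟨k, rfl⟩ := Fin.exists_succAbove_eq hk
    have := aux_sub P y j hyj k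
    rw [hyv, hv0] at this
    simp only [Pi.zero_apply] at this
    linarith
  have h1 := aux_max P hP0 hP1 hirr y j (fun k h => (hk k h).le)
  have h2 := aux_max P hP0 hP1 hirr (fun l => - y l) j (fun k h => by
    simp only [mul_neg, Finset.sum_neg_distrib]
    rw [← hk k h])
  funext k
  have e : v k = y (j.succAbove k) := by simp [y]
  have a := h1 (j.succAbove k)
  have b := h2 (j.succAbove k)
  rw [hyj] at a b
  rw [e]
  simp only [Pi.zero_apply]
  linarith



/-- Uncontrolled setting with an irreducible stochastic matrix `P`
(`d = n + 2`), invariant probability `μ`, cost vector `c̄`, cost matrix `C` and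
domain `D`.  The following are equivalent:
(i) `D` is nonempty;
(ii) `∃ i ≠ j, C i j + C j i ≥ 0`;
(iii) `∑ i, μ i * c̄ i ≥ 0`;
(iv) `∀ i ≠ j, C i j + C j i ≥ 0`. -/
theorem nonempty_domain_tfae
    (n : ℕ)
    (P : Matrix (Fin (n + 2)) (Fin (n + 2)) ℝ)
    (c : Fin (n + 2) → ℝ) (μ : Fin (n + 2) → ℝ)
    (hP0 : ∀ i j, 0 ≤ P i j)
    (hP1 : ∀ i, ∑ j, P i j = 1)
    (hirr : ∀ i j, ∃ k : ℕ, 1 ≤ k ∧ 0 < (P ^ k) i j)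
    (hμpos : ∀ i, 0 < μ i)
    (hμsum : ∑ i, μ i = 1)
    (hμinv : ∀ j, ∑ i, μ i * P i j = μ j)
    (C : Fin (n + 2) → Fin (n + 2) → ℝ)
    (hCdiag : ∀ j, C j j = 0)
    (hCoff : ∀ (j : Fin (n + 2)) (k : Fin (n + 1)),
      C (j.succAbove k) j =
        (((1 - P).submatrix j.succAbove j.succAbove)⁻¹ *ᵥ fun l => c (j.succAbove l)) k)
    (D : Set (Fin (n + 2) → ℝ))
    (hD : D = {x | ∀ i, (∑ j, P i j * x j) - c i ≤ x i}) :
    [D.Nonempty,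
      ∃ i j : Fin (n + 2), i ≠ j ∧ 0 ≤ C i j + C j i,
      0 ≤ ∑ i, μ i * c i,
      ∀ i j : Fin (n + 2), i ≠ j → 0 ≤ C i j + C j i].TFAE := by
  have hQoff : ∀ i j, i ≠ j → C i j - ∑ l, P i l * C l j = c i := by
    intro i j hij
    obtain ⟨k, rfl⟩ := Fin.exists_succAbove_eq hij
    rw [← aux_sub P (fun l => C l j) j (hCdiag j) k]
    have : (fun l => C (j.succAbove l) j) =
        ((1 - P).submatrix j.succAbove j.succAbove)⁻¹ *ᵥ fun l => c (j.succAbove l) := by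
      funext l
      exact hCoff j l
    rw [this, Matrix.mulVec_mulVec,
      Matrix.mul_nonsing_inv _ (aux_inv P hP0 hP1 hirr j), Matrix.one_mulVec]
  have hμQ : ∀ x : Fin (n + 2) → ℝ, ∑ i, μ i * (x i - ∑ l, P i l * x l) = 0 := by
    intro x
    simp only [mul_sub, Finset.sum_sub_distrib, Finset.mul_sum]
    rw [Finset.sum_comm (f := fun i l => μ i * (P i l * x l))]
    simp only [← mul_assoc, ← Finset.sum_mul, hμinv]
    exact sub_self _
  have hQdiag : ∀ j, μ j * (c j - (C j j - ∑ l, P j l * C l j)) = ∑ i, μ i * c i := by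
    intro j
    have h1 := hμQ (fun l => C l j)
    have h2 : ∑ i, μ i * (c i - (C i j - ∑ l, P i l * C l j))
        = μ j * (c j - (C j j - ∑ l, P j l * C l j)) := by
      apply Finset.sum_eq_single j
      · intro b _ hb
        rw [hQoff b j hb]
        simp
      · simp
    rw [← h2]
    simp only [mul_sub (_ : ℝ) (c _), Finset.sum_sub_distrib]
    linarith
  have hy : ∀ i j k, ∑ l, P k l * (C l j - C l i) = ∑ l, P k l * C l j - ∑ l, P k l * C l i := by
    intro i j k
    simp only [mul_sub, Finset.sum_sub_distrib]
  tfae_have 1 → 3 := by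
    rintro ⟨x, hx⟩
    rw [hD] at hx
    have h1 := hμQ x
    have h2 : 0 ≤ ∑ i, μ i * (c i + (x i - ∑ l, P i l * x l)) :=
      Finset.sum_nonneg fun i _ => mul_nonneg (hμpos i).le (by have := hx i; linarith)
    simp only [mul_add (_ : ℝ) (c _), Finset.sum_add_distrib] at h2
    linarith
  tfae_have 3 → 1 := by
    intro hm
    refine ⟨fun l => - C l 0, ?_⟩
    rw [hD]
    intro i
    simp only [mul_neg, Finset.sum_neg_distrib]
    by_cases hi : i = 0
    · subst hi
      have h1 := hQdiag 0
      rw [← h1] at hm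
      have := nonneg_of_mul_nonneg_right hm (hμpos 0)
      linarith
    · have := hQoff i 0 hi
      linarith
  tfae_have 3 → 4 := by
    intro hm i j hij
    have h1 := aux_max P hP0 hP1 hirr (fun l => C l j - C l i) i (by
      intro k hk
      simp only [hy]
      have a := hQoff k i hk
      by_cases hkj : k = j
      · subst hkj
        have h1 := hQdiag k
        rw [← h1] at hm
        have := nonneg_of_mul_nonneg_right hm (hμpos k)
        linarith
      · have := hQoff k j hkj
        linarith) j
    simp only [hCdiag] at h1
    linarith
  tfae_have 4 → 2 := by
    intro h
    exact ⟨0, 1, by simp, h 0 1 (by simp)⟩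
  tfae_have 2 → 3 := by
    rintro ⟨i, j, hij, h⟩
    by_contra! hm
    have hj : c j - (C j j - ∑ l, P j l * C l j) < 0 := by
      have h1 := hQdiag j
      rw [← h1] at hm
      by_contra! h2
      have := mul_nonneg (hμpos j).le h2
      linarith
    have h1 := aux_max P hP0 hP1 hirr (fun l => C l i - C l j) i (by
      intro k hk
      simp only [hy]
      have a := hQoff k i hk
      by_cases hkj : k = j
      · subst hkj
        linarith
      · have := hQoff k j hkj
        linarith)
    have h2 : ∑ l, P j l * (C l i - C l j) ≤ ∑ l, P j l * (C i i - C i j) :=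
      Finset.sum_le_sum fun l _ => mul_le_mul_of_nonneg_left (h1 l) (hP0 j l)
    rw [← Finset.sum_mul, hP1, hy] at h2
    have a := hQoff j i hij.symm
    have b := hCdiag i
    have b2 := hCdiag j
    linarith
  tfae_finish
end
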